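/- Lemma (endpoint slopes of the least-squares residual). Let a ≤ b be integers with ℓ = b − a + 1 ≥ 2, let u_a,…,u_b be real numbers, let x_t = [1, t − a + 1]ᵀ ∈ ℝ², X ∈ ℝ^{ℓ×2} the matrix with rows x_a,…,x_b, and β = (XᵀX)^{−1} Xᵀ u_{a:b} the least-squares coefficient. Define the residuals r_t = βᵀ x_t − u_t for t ∈ [a,b]. Then |r_{a+1} − r_a| ≤ ‖D² u_{a:b}‖₁ and |r_b − r_{b−1}| ≤ ‖D² u_{a:b}‖₁. -/

import Mathlib

/-- Covariate `x_t = [1, t - a + 1]ᵀ` for an interval starting at `a`. -/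
noncomputable def xv (a t : ℕ) : Fin 2 → ℝ := ![1, (t : ℝ) - (a : ℝ) + 1]

/-- `‖D² u_{a:b}‖₁` of the subsequence `u_a, …, u_b`. -/
noncomputable def tv2 (u : ℕ → ℝ) (a b : ℕ) : ℝ :=
  ∑ t ∈ Finset.Icc a (b - 2), |u (t + 2) - 2 * u (t + 1) + u t|

/-!
The residuals are orthogonal to the constants and to `t`, so their covariance with `t` vanishes.
If all increments of `r` on `[a, b]` were at least `δ`, this covariance would be at least `δ` times
the variance of `t`; hence `δ ≤ 0`. Since `r + u` is affine, any two increments of `r` differ by at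
most `‖D² r‖₁ = ‖D² u‖₁`, so for each `t` one may take `δ = r_{t+1} - r_t - ‖D² u‖₁`. The reverse
bound is the same argument for `-r`.
-/

open Finset Matrix

section NormalEquations

variable {ι n R : Type*} [Fintype n]

lemma sum_vecMulVec_self_mulVec [CommSemiring R] (s : Finset ι) (x : ι → n → R) (v : n → R) :
    (∑ i ∈ s, vecMulVec (x i) (x i)) *ᵥ v = ∑ i ∈ s, (v ⬝ᵥ x i) • x i := by
  simp only [sum_mulVec, vecMulVec_mulVec, op_smul_eq_smul, dotProduct_comm]

variable [DecidableEq n] [CommRing R] {s : Finset ι} {x : ι → n → R}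

lemma det_sum_vecMulVec_self_ne_zero [LinearOrder R] [IsStrictOrderedRing R]
    (hx : ∀ v : n → R, (∀ i ∈ s, v ⬝ᵥ x i = 0) → v = 0) :
    (∑ i ∈ s, vecMulVec (x i) (x i)).det ≠ 0 := by
  intro hdet
  obtain ⟨v, hv, hGv⟩ := exists_mulVec_eq_zero_iff.mpr hdet
  have hquad : ∑ i ∈ s, (v ⬝ᵥ x i) * (v ⬝ᵥ x i) = 0 := by
    simpa only [sum_vecMulVec_self_mulVec, dotProduct_sum, dotProduct_smul, smul_eq_mul,
      dotProduct_zero] using congrArg (v ⬝ᵥ ·) hGv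
  rw [sum_eq_zero_iff_of_nonneg fun i _ => mul_self_nonneg _] at hquad
  exact hv (hx v fun i hi => mul_self_eq_zero.mp (hquad i hi))

lemma sum_residual_smul_eq_zero (hG : IsUnit (∑ i ∈ s, vecMulVec (x i) (x i)).det)
    (u : ι → R) {β : n → R}
    (hβ : β = (∑ i ∈ s, vecMulVec (x i) (x i))⁻¹ *ᵥ ∑ i ∈ s, u i • x i) :
    ∑ i ∈ s, (β ⬝ᵥ x i - u i) • x i = 0 := by
  have hnormal : (∑ i ∈ s, vecMulVec (x i) (x i)) *ᵥ β = ∑ i ∈ s, u i • x i := by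
    rw [hβ, mulVec_mulVec, mul_nonsing_inv _ hG, one_mulVec]
  simp only [sub_smul, sum_sub_distrib, ← sum_vecMulVec_self_mulVec, hnormal, sub_self]

end NormalEquations

section Covariance

variable {ι R : Type*} [CommRing R]

lemma sum_sum_sub_mul_sub (s : Finset ι) (f g : ι → R) :
    ∑ i ∈ s, ∑ j ∈ s, (f i - f j) * (g i - g j) =
      2 * (#s * ∑ i ∈ s, f i * g i - (∑ i ∈ s, f i) * ∑ i ∈ s, g i) := by
  simp only [sub_mul, mul_sub, sum_sub_distrib, sum_const, nsmul_eq_mul, ← mul_sum, ← sum_mul]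
  ring

variable [LinearOrder R] [IsStrictOrderedRing R]

lemma nonpos_of_forall_mul_sq_le {s : Finset ι} {f g : ι → R} {δ : R}
    (hf : ∑ i ∈ s, f i = 0) (hfg : ∑ i ∈ s, f i * g i = 0)
    (hg : ∃ i ∈ s, ∃ j ∈ s, g i ≠ g j)
    (h : ∀ i ∈ s, ∀ j ∈ s, δ * (g i - g j) ^ 2 ≤ (f i - f j) * (g i - g j)) :
    δ ≤ 0 := by
  obtain ⟨i, hi, j, hj, hij⟩ := hg
  have hvar : 0 < ∑ i ∈ s, ∑ j ∈ s, (g i - g j) ^ 2 :=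
    sum_pos' (fun _ _ => sum_nonneg fun _ _ => sq_nonneg _)
      ⟨i, hi, sum_pos' (fun _ _ => sq_nonneg _) ⟨j, hj, sq_pos_of_ne_zero (sub_ne_zero.mpr hij)⟩⟩
  have hcov : δ * ∑ i ∈ s, ∑ j ∈ s, (g i - g j) ^ 2 ≤ 0 :=
    calc δ * ∑ i ∈ s, ∑ j ∈ s, (g i - g j) ^ 2
        = ∑ i ∈ s, ∑ j ∈ s, δ * (g i - g j) ^ 2 := by simp only [mul_sum]
      _ ≤ ∑ i ∈ s, ∑ j ∈ s, (f i - f j) * (g i - g j) :=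
        sum_le_sum fun i hi => sum_le_sum fun j hj => h i hi j hj
      _ = 0 := by simp only [sum_sum_sub_mul_sub, hf, hfg, mul_zero, zero_mul, sub_zero]
  exact nonpos_of_mul_nonpos_left hcov hvar

end Covariance

section Increments

lemma nsmul_le_sub_of_forall_le_increment {M : Type*} [AddCommGroup M] [PartialOrder M]
    [IsOrderedAddMonoid M] {a b : ℕ} {r : ℕ → M} {δ : M} (hab : a ≤ b)
    (h : ∀ t ∈ Ico a b, δ ≤ r (t + 1) - r t) : (b - a) • δ ≤ r b - r a := by
  simpa only [sum_Ico_sub r hab, Nat.card_Ico] using card_nsmul_le_sum (Ico a b) _ δ h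

variable {R : Type*} [CommRing R] [LinearOrder R] [IsStrictOrderedRing R]
  {a b : ℕ} {r : ℕ → R} {δ : R}

lemma nonpos_of_forall_le_increment (hab : a < b) (h0 : ∑ t ∈ Icc a b, r t = 0)
    (h1 : ∑ t ∈ Icc a b, r t * t = 0) (h : ∀ t ∈ Ico a b, δ ≤ r (t + 1) - r t) : δ ≤ 0 := by
  have hle : ∀ i ∈ Icc a b, ∀ j ∈ Icc a b, i ≤ j →
      δ * ((j : R) - i) ^ 2 ≤ (r j - r i) * ((j : R) - i) := by
    intro i hi j hj hij
    have hslope : δ * ((j : R) - i) ≤ r j - r i := by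
      rw [mul_comm, ← Nat.cast_sub hij, ← nsmul_eq_mul]
      exact nsmul_le_sub_of_forall_le_increment hij fun t ht =>
        h t (Ico_subset_Ico (mem_Icc.mp hi).1 (mem_Icc.mp hj).2 ht)
    rw [sq, ← mul_assoc]
    exact mul_le_mul_of_nonneg_right hslope (sub_nonneg.mpr (Nat.cast_le.mpr hij))
  refine nonpos_of_forall_mul_sq_le h0 h1
    ⟨a, left_mem_Icc.mpr hab.le, b, right_mem_Icc.mpr hab.le, Nat.cast_injective.ne hab.ne⟩ ?_
  intro i hi j hj
  rcases le_total i j with hij | hji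
  · linear_combination hle i hi j hj hij
  · exact hle j hj i hi hji

lemma nonneg_of_forall_increment_le (hab : a < b) (h0 : ∑ t ∈ Icc a b, r t = 0)
    (h1 : ∑ t ∈ Icc a b, r t * t = 0) (h : ∀ t ∈ Ico a b, r (t + 1) - r t ≤ δ) : 0 ≤ δ := by
  refine neg_nonpos.mp (nonpos_of_forall_le_increment (r := -r) hab ?_ ?_ fun t ht => ?_)
  · simp [h0]
  · simp [h1]
  · simpa only [Pi.neg_apply, neg_sub_neg, neg_sub] using neg_le_neg (h t ht)

end Increments

section SecondDifferences

lemma dist_le_sum_Ico_dist_of_mem_Icc {E : Type*} [PseudoMetricSpace E] (f : ℕ → E)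
    {a b s t : ℕ} (hs : s ∈ Icc a b) (ht : t ∈ Icc a b) :
    dist (f s) (f t) ≤ ∑ k ∈ Ico a b, dist (f k) (f (k + 1)) := by
  wlog hst : s ≤ t generalizing s t
  · rw [dist_comm]
    exact this ht hs (le_of_not_ge hst)
  exact (dist_le_Ico_sum_dist f hst).trans (sum_le_sum_of_subset_of_nonneg
    (Ico_subset_Ico (mem_Icc.mp hs).1 (mem_Icc.mp ht).2) fun _ _ _ => dist_nonneg)

variable {a b : ℕ}

lemma abs_increment_sub_increment_le_tv2 (r : ℕ → ℝ) {s t : ℕ} (hs : s ∈ Ico a b)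
    (ht : t ∈ Ico a b) : |(r (s + 1) - r s) - (r (t + 1) - r t)| ≤ tv2 r a b := by
  have hmem : ∀ {k}, k ∈ Ico a b → k ∈ Icc a (b - 1) := fun hk => by
    rw [mem_Ico] at hk; rw [mem_Icc]; omega
  have hD : ∀ k, dist (r (k + 1) - r k) (r (k + 1 + 1) - r (k + 1)) =
      |r (k + 2) - 2 * r (k + 1) + r k| := fun k => by
    rw [dist_comm, Real.dist_eq]
    ring_nf
  -- Strict for `a = 0`, `b = 1`, where truncation turns `Icc a (b - 2)` into `{0}`.
  have hsub : Ico a (b - 1) ⊆ Icc a (b - 2) := fun k hk => by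
    rw [mem_Ico] at hk; rw [mem_Icc]; omega
  calc |(r (s + 1) - r s) - (r (t + 1) - r t)|
      ≤ ∑ k ∈ Ico a (b - 1), dist (r (k + 1) - r k) (r (k + 1 + 1) - r (k + 1)) :=
        dist_le_sum_Ico_dist_of_mem_Icc (fun k => r (k + 1) - r k) (hmem hs) (hmem ht)
    _ = ∑ k ∈ Ico a (b - 1), |r (k + 2) - 2 * r (k + 1) + r k| := sum_congr rfl fun k _ => hD k
    _ ≤ tv2 r a b := sum_le_sum_of_subset_of_nonneg hsub fun _ _ _ => abs_nonneg _

lemma tv2_affine_sub (c d : ℝ) (u : ℕ → ℝ) (a b : ℕ) :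
    tv2 (fun t => c + d * t - u t) a b = tv2 u a b := by
  refine sum_congr rfl fun t _ => ?_
  rw [← abs_neg]
  push_cast
  ring_nf

lemma abs_increment_le_tv2_of_sum_eq_zero {r : ℕ → ℝ} (h0 : ∑ s ∈ Icc a b, r s = 0)
    (h1 : ∑ s ∈ Icc a b, r s * s = 0) {t : ℕ} (ht : t ∈ Ico a b) :
    |r (t + 1) - r t| ≤ tv2 r a b := by
  have hab : a < b := (mem_Ico.mp ht).1.trans_lt (mem_Ico.mp ht).2
  have hosc := fun s (hs : s ∈ Ico a b) => abs_le.mp (abs_increment_sub_increment_le_tv2 r ht hs)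
  have hlower : 0 ≤ r (t + 1) - r t + tv2 r a b :=
    nonneg_of_forall_increment_le hab h0 h1 fun s hs => by linarith [(hosc s hs).1]
  have hupper : r (t + 1) - r t - tv2 r a b ≤ 0 :=
    nonpos_of_forall_le_increment hab h0 h1 fun s hs => by linarith [(hosc s hs).2]
  exact abs_le.mpr ⟨by linarith, by linarith⟩

end SecondDifferences

section LinearTrend

variable {a b : ℕ}

lemma dotProduct_xv (β : Fin 2 → ℝ) (a t : ℕ) :
    β ⬝ᵥ xv a t = β 0 + β 1 * (1 - a) + β 1 * t := by
  simp only [xv, dotProduct, Fin.sum_univ_two, cons_val_zero, cons_val_one, cons_val_fin_one]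
  ring

lemma det_gram_xv_ne_zero (hab : a < b) :
    (∑ s ∈ Icc a b, vecMulVec (xv a s) (xv a s)).det ≠ 0 := by
  refine det_sum_vecMulVec_self_ne_zero fun v hv => ?_
  have ha := hv a (left_mem_Icc.mpr hab.le)
  have hsucc := hv (a + 1) (mem_Icc.mpr ⟨a.le_succ, hab⟩)
  rw [dotProduct_xv] at ha hsucc
  push_cast at hsucc
  have hslope : v 1 = 0 := by linear_combination hsucc - ha
  have hintercept : v 0 = 0 := by linear_combination ha - hslope
  ext i
  fin_cases i
  exacts [hintercept, hslope]

lemma sum_eq_zero_of_sum_smul_xv_eq_zero {s : Finset ℕ} {r : ℕ → ℝ}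
    (h : ∑ t ∈ s, r t • xv a t = 0) : ∑ t ∈ s, r t = 0 ∧ ∑ t ∈ s, r t * t = 0 := by
  have h0 : ∑ t ∈ s, r t = 0 := by simpa [xv] using congrFun h 0
  have h1 : ∑ t ∈ s, r t * ((t : ℝ) - a + 1) = 0 := by simpa [xv] using congrFun h 1
  refine ⟨h0, ?_⟩
  calc ∑ t ∈ s, r t * t
      = ∑ t ∈ s, r t * ((t : ℝ) - a + 1) + (∑ t ∈ s, r t) * (a - 1) := by
        rw [sum_mul, ← sum_add_distrib]
        exact sum_congr rfl fun t _ => by ring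
    _ = 0 := by rw [h0, h1, zero_mul, add_zero]

end LinearTrend

/-!
Lemma (endpoint slopes of the least-squares residual).  With `ℓ = b - a + 1 ≥ 2` and
`β = (XᵀX)⁻¹ Xᵀ u_{a:b}` the least-squares coefficient, the residuals
`r_t = βᵀ x_t - u_t` satisfy `|r_{a+1} - r_a| ≤ ‖D² u_{a:b}‖₁` and
`|r_b - r_{b-1}| ≤ ‖D² u_{a:b}‖₁`.
-/
theorem least_squares_residual_endpoint_slopes (a b : ℕ) (hab : a ≤ b)
    (hlen : 2 ≤ b - a + 1)
    (u : ℕ → ℝ) (β : Fin 2 → ℝ)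
    (hβ : β = ((∑ s ∈ Finset.Icc a b, Matrix.vecMulVec (xv a s) (xv a s))⁻¹).mulVec
        (∑ s ∈ Finset.Icc a b, u s • xv a s))
    (r : ℕ → ℝ) (hr : ∀ t, r t = (∑ i, β i * xv a t i) - u t) :
    |r (a + 1) - r a| ≤ tv2 u a b ∧ |r b - r (b - 1)| ≤ tv2 u a b := by
  have hlt : a < b := by omega
  have horth : ∑ t ∈ Icc a b, r t • xv a t = 0 := by
    simpa only [hr, dotProduct] using
      sum_residual_smul_eq_zero (det_gram_xv_ne_zero hlt).isUnit u hβ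
  obtain ⟨h0, h1⟩ := sum_eq_zero_of_sum_smul_xv_eq_zero horth
  have hr_affine : r = fun t : ℕ => β 0 + β 1 * (1 - a) + β 1 * t - u t :=
    funext fun t => (hr t).trans (congrArg (· - u t) (dotProduct_xv β a t))
  have htv : tv2 r a b = tv2 u a b := by rw [hr_affine, tv2_affine_sub]
  have hslope : ∀ t ∈ Ico a b, |r (t + 1) - r t| ≤ tv2 u a b := fun t ht =>
    htv ▸ abs_increment_le_tv2_of_sum_eq_zero h0 h1 ht
  refine ⟨hslope a (left_mem_Ico.mpr hlt), ?_⟩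
  have hlast := hslope (b - 1) (mem_Ico.mpr (by omega))
  rwa [Nat.sub_add_cancel (by omega)] at hlast
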